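/- Let c₁ and c₂ be nonzero real numbers with c₁ + c₂ = 1, let s ≥ 0, and let s₁ ∈ ℝ satisfy s₁ ≤ 2s − 1. Then there exists a constant C > 0 (depending on c₁, c₂, s, s₁) such that for all sequences a, b : ℤ → ℂ, Σ_{k ∈ ℤ : c₁k ∈ ℤ} ⟨k⟩^{2s₁} k² |a_{c₁k}|² |b_{c₂k}|² ≤ C · (Σ_{m ∈ ℤ} ⟨m⟩^{2s} |a_m|²) · (Σ_{n ∈ ℤ} ⟨n⟩^{2s} |b_n|²). (Note that if c₁k ∈ ℤ then also c₂k = k − c₁k ∈ ℤ, so the left-hand side is well defined; this is the H^{s₁} bound for the resonant bilinear term ρ(a,b)_k = k·a_{c₁k}·b_{c₂k}.) -/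

import Mathlib

/-- The Japanese bracket `⟨x⟩ = (1 + x²)^{1/2}`. -/
noncomputable def jb (x : ℝ) : ℝ := Real.sqrt (1 + x^2)

open scoped Classical

theorem jb_one_le (x : ℝ) : 1 ≤ jb x := by
  unfold jb
  rw [Real.one_le_sqrt]
  nlinarith [sq_nonneg x]

theorem jb_scale (c x : ℝ) (hc : c ≠ 0) : jb x ≤ jb c⁻¹ * jb (c * x) := by
  unfold jb
  rw [← Real.sqrt_mul (by positivity)]
  apply Real.sqrt_le_sqrt
  have h : (1 + c⁻¹ ^ 2) * (1 + (c * x) ^ 2) = 1 + x ^ 2 + (c⁻¹ ^ 2 + (c * x) ^ 2) := by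
    field_simp
    ring
  rw [h]
  have : 0 ≤ c⁻¹ ^ 2 + (c * x) ^ 2 := by positivity
  linarith

theorem jb_scale_rpow (c x s : ℝ) (hc : c ≠ 0) (hs : 0 ≤ s) :
    jb x ^ (2 * s) ≤ jb c⁻¹ ^ (2 * s) * jb (c * x) ^ (2 * s) := by
  have h1 := jb_one_le x
  have h2 := jb_one_le c⁻¹
  have h3 := jb_one_le (c * x)
  rw [← Real.mul_rpow (by linarith) (by linarith)]
  exact Real.rpow_le_rpow (by linarith) (jb_scale c x hc) (by linarith)

theorem jb_weight (x s s₁ : ℝ) (hs₁ : s₁ ≤ 2 * s - 1) :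
    jb x ^ (2 * s₁) * x ^ 2 ≤ jb x ^ (2 * s) * jb x ^ (2 * s) := by
  have h1 := jb_one_le x
  have h0 : 0 < jb x := by linarith
  have hx : x ^ 2 ≤ jb x ^ (2 : ℝ) := by
    rw [Real.rpow_two]
    unfold jb
    rw [Real.sq_sqrt (by positivity)]
    linarith
  calc jb x ^ (2 * s₁) * x ^ 2 ≤ jb x ^ (2 * s₁) * jb x ^ (2 : ℝ) := by gcongr
    _ = jb x ^ (2 * s₁ + 2) := (Real.rpow_add h0 _ _).symm
    _ ≤ jb x ^ (2 * s + 2 * s) := Real.rpow_le_rpow_of_exponent_le h1 (by linarith)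
    _ = _ := Real.rpow_add h0 _ _

/-- The change of variables `(k, m) ↦ (m, k - m)`. -/
def shearEquiv : ℤ × ℤ ≃ ℤ × ℤ where
  toFun p := (p.2, p.1 - p.2)
  invFun q := (q.1 + q.2, q.1)
  left_inv p := by ext <;> simp
  right_inv q := by ext <;> simp

/-- Resonant bilinear estimate: if `c₁, c₂` are nonzero reals with `c₁ + c₂ = 1`, `s ≥ 0` and
`s₁ ≤ 2s − 1`, then `Σ_{k : c₁k ∈ ℤ} ⟨k⟩^{2s₁} k² |a_{c₁k}|² |b_{c₂k}|²
  ≤ C (Σ_m ⟨m⟩^{2s}|a_m|²)(Σ_n ⟨n⟩^{2s}|b_n|²)`.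
The sum over `{k : c₁k ∈ ℤ}` is encoded as a double sum over `k, m ∈ ℤ` with the
indicator of `m = c₁k` (for each `k` at most one `m` qualifies, and then `c₂k = k − m`). -/
theorem rho_resonant_estimate (c₁ c₂ : ℝ) (hc₁ : c₁ ≠ 0) (hc₂ : c₂ ≠ 0) (hcc : c₁ + c₂ = 1)
    (s s₁ : ℝ) (hs : 0 ≤ s) (hs₁ : s₁ ≤ 2 * s - 1) :
    ∃ C > 0, ∀ a b : ℤ → ℂ,
      Summable (fun m : ℤ => jb (m : ℝ) ^ (2 * s) * ‖a m‖^2) →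
      Summable (fun n : ℤ => jb (n : ℝ) ^ (2 * s) * ‖b n‖^2) →
      Summable (fun k : ℤ => ∑' m : ℤ,
        if (m : ℝ) = c₁ * (k : ℝ) then
          jb (k : ℝ) ^ (2 * s₁) * (k : ℝ)^2 * ‖a m‖^2 * ‖b (k - m)‖^2 else 0) ∧
      (∑' k : ℤ, ∑' m : ℤ,
        if (m : ℝ) = c₁ * (k : ℝ) then
          jb (k : ℝ) ^ (2 * s₁) * (k : ℝ)^2 * ‖a m‖^2 * ‖b (k - m)‖^2 else 0)
        ≤ C * (∑' m : ℤ, jb (m : ℝ) ^ (2 * s) * ‖a m‖^2)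
            * (∑' n : ℤ, jb (n : ℝ) ^ (2 * s) * ‖b n‖^2) := by
  have hp1 : 0 < jb c₁⁻¹ := by linarith [jb_one_le c₁⁻¹]
  have hp2 : 0 < jb c₂⁻¹ := by linarith [jb_one_le c₂⁻¹]
  have hpos : ∀ x : ℝ, 0 < jb x := fun x => by linarith [jb_one_le x]
  refine ⟨jb c₁⁻¹ ^ (2 * s) * jb c₂⁻¹ ^ (2 * s), by positivity, ?_⟩
  intro a b hA hB
  set C := jb c₁⁻¹ ^ (2 * s) * jb c₂⁻¹ ^ (2 * s) with hC
  have hCpos : 0 < C := by positivity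
  set A : ℤ → ℝ := fun m => jb (m : ℝ) ^ (2 * s) * ‖a m‖^2 with hAdef
  set B : ℤ → ℝ := fun m => jb (m : ℝ) ^ (2 * s) * ‖b m‖^2 with hBdef
  have hA0 : ∀ m, 0 ≤ A m := fun m =>
    mul_nonneg (Real.rpow_nonneg (hpos _).le _) (by positivity)
  have hB0 : ∀ m, 0 ≤ B m := fun m =>
    mul_nonneg (Real.rpow_nonneg (hpos _).le _) (by positivity)
  have hAB : Summable (fun p : ℤ × ℤ => A p.1 * B p.2) := hA.mul_of_nonneg hB hA0 hB0
  have hD : Summable (fun p : ℤ × ℤ => C * (A p.2 * B (p.1 - p.2))) :=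
    ((shearEquiv.summable_iff (f := fun p : ℤ × ℤ => A p.1 * B p.2)).2 hAB).mul_left C
  have hDsum : ∑' p : ℤ × ℤ, C * (A p.2 * B (p.1 - p.2)) = C * (∑' m, A m) * (∑' n, B n) := by
    rw [tsum_mul_left, mul_assoc C, hA.tsum_mul_tsum hB hAB]
    congr 1
    exact shearEquiv.tsum_eq (fun p : ℤ × ℤ => A p.1 * B p.2)
  let T : ℤ × ℤ → ℝ := fun p => if (p.2 : ℝ) = c₁ * (p.1 : ℝ) then
          jb (p.1 : ℝ) ^ (2 * s₁) * (p.1 : ℝ)^2 * ‖a p.2‖^2 * ‖b (p.1 - p.2)‖^2 else 0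
  have hT0 : ∀ p, 0 ≤ T p := by
    intro p
    have := Real.rpow_nonneg (hpos (p.1 : ℝ)).le (2 * s₁)
    simp only [T]
    split_ifs
    · positivity
    · exact le_rfl
  have hTD : ∀ p : ℤ × ℤ, T p ≤ C * (A p.2 * B (p.1 - p.2)) := by
    rintro ⟨k, m⟩
    simp only [T]
    split_ifs with h
    · have hn : ((k - m : ℤ) : ℝ) = c₂ * k := by
        push_cast
        rw [h, eq_sub_of_add_eq' hcc]
        ring
      have e1 := jb_scale_rpow c₁ k s hc₁ hs
      have e2 := jb_scale_rpow c₂ k s hc₂ hs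
      rw [← h] at e1
      rw [← hn] at e2
      have hk := Real.rpow_nonneg (hpos (k : ℝ)).le (2 * s)
      have e3 := (jb_weight (k : ℝ) s s₁ hs₁).trans (mul_le_mul e1 e2 hk (hk.trans e1))
      calc _ = (jb (k : ℝ) ^ (2 * s₁) * (k : ℝ)^2) * (‖a m‖^2 * ‖b (k - m)‖^2) := by ring
        _ ≤ _ := mul_le_mul_of_nonneg_right e3 (by positivity)
        _ = _ := by simp only [hC, hAdef, hBdef]; ring
    · exact mul_nonneg hCpos.le (mul_nonneg (hA0 _) (hB0 _))
  have hT : Summable T := Summable.of_nonneg_of_le hT0 hTD hD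
  refine ⟨hT.prod, ?_⟩
  rw [← hDsum]
  calc _ = ∑' p, T p := (hT.tsum_prod).symm
    _ ≤ _ := hT.tsum_le_tsum hTD hD
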